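/- Let χ be a kernel satisfying (χ1)–(χ4) with Lipschitz condition (χ3) holding for ψ(u) = u, and suppose M_p(L) := ∫_ℝ L(u)|u|^p du < +∞ for some 1 ≤ p < ∞. Then for every f ∈ L^p(ℝ) and every sufficiently large w > 0, ‖S_w f − f‖_p ≤ δ^{−1/p} [2 m_{0,Π}(L)]^{(p−1)/p} [‖L‖₁ + M_p(L)]^{1/p} ω_p(f, 1/w) + δ^{−1/p} m_{0,Π}(L) Δ^{1/p} ω_p(f, Δ/w) + M₂ ‖f‖_p w^{−θ₀}, where m_{0,Π}(L) := sup_{u∈ℝ} ∑_{k∈ℤ} L(u − t_k) < +∞ and M₂, θ₀ > 0 are the constants of condition (χ4). -/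

import Mathlib

/-!
The difference `S_w f x - f x` is split as `∑ (χ(w x - t_k, c_k) - χ(w x - t_k, f x))` plus
`∑ χ(w x - t_k, f x) - f x`, where `c_k` is the mean of `f` over the cell
`(t_k / w, t_{k+1} / w]`. Condition (χ4) bounds the second part by `M₂ w ^ (-θ₀) |f x|`. By (χ3)
the first part is at most `∑ L(w x - t_k) |c_k - f x|`, and inserting `f (u + x - t_k / w)` for `u`
in the cell bounds this by `cellShift + pointShift`; see `enorm_SwOp_sub_le`.

Both majorants are raised to the power `p` by Jensen's inequality, for the weights `L(w x - t_k)`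
and for the cell means (`tsum_average_rpow_le`), which costs a factor `m_{0,Π}(L) ^ (p - 1)`.
Integrating `cellShift` in `x` and substituting `y = x - t_k / w`, the cells reassemble into `ℝ`,
and `δ⁻¹ ∫ L(z) ‖f(· + z / w) - f‖_p ^ p dz` remains; the dilation inequality
`ω(f, |z| / w) ≤ (1 + |z|) ω(f, 1 / w)` with `(1 + |z|) ^ p ≤ 2 ^ (p - 1) (1 + |z| ^ p)` gives
the first term. In `pointShift` all offsets lie in `(0, Δ / w]`, which gives the second term.

The kernel `χ` need not be measurable in its first variable, so `S_w f` need not be measurable. All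
estimates are carried out with lower Lebesgue integrals in `ℝ≥0∞` against measurable majorants, and
`pNorm_le_lpE` transfers them to `pNorm`. Finiteness of `m_{0,Π}(L)`, needed for the real number
`m0R` to be the true supremum, is `m0_ne_top`.
-/

open MeasureTheory Filter Real Set

noncomputable section

/-- Discrete absolute moment of order `β` (ENNReal-valued). -/
def dMoment (t : ℤ → ℝ) (L : ℝ → ℝ) (β : ℝ) : ENNReal :=
  ⨆ u : ℝ, ∑' k : ℤ, ENNReal.ofReal (L (u - t k) * |u - t k| ^ β)

/-- `m_{0,Π}(L)` as a real number. -/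
def m0R (t : ℤ → ℝ) (L : ℝ → ℝ) : ℝ :=
  (⨆ u : ℝ, ∑' k : ℤ, ENNReal.ofReal (L (u - t k))).toReal

/-- The `L^p`-norm `(∫ |g|^p)^{1/p}`. -/
def pNorm (p : ℝ) (g : ℝ → ℝ) : ℝ := (∫ x : ℝ, |g x| ^ p) ^ (1 / p)

/-- The `L^p`-modulus of smoothness of order one. -/
def omegaP (p : ℝ) (f : ℝ → ℝ) (d : ℝ) : ℝ :=
  ⨆ s : {s : ℝ // |s| ≤ d}, pNorm p (fun x => f (x + (s : ℝ)) - f x)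

/-- The nonlinear sampling Kantorovich operator `S_w` based on the kernel `χ`. -/
def SwOp (t : ℤ → ℝ) (χ : ℝ → ℝ → ℝ) (f : ℝ → ℝ) (w x : ℝ) : ℝ :=
  ∑' k : ℤ, χ (w * x - t k)
    ((w / (t (k + 1) - t k)) * ∫ u in (t k / w)..(t (k + 1) / w), f u)

/-! ### `L^p` functionals and the modulus of smoothness -/

/-- The extended-real `L^p` functional of an `ℝ≥0∞`-valued function on the line. -/
def lpE (p : ℝ) (g : ℝ → ENNReal) : ENNReal := (∫⁻ x, g x ^ p) ^ (1 / p)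

theorem lpE_mono {p : ℝ} (hp : 1 ≤ p) {g h : ℝ → ENNReal} (hgh : ∀ x, g x ≤ h x) :
    lpE p g ≤ lpE p h := by
  unfold lpE
  gcongr with x
  exact hgh x

theorem lpE_add_le {p : ℝ} (hp : 1 ≤ p) {g h : ℝ → ENNReal} (hg : Measurable g)
    (hh : Measurable h) : lpE p (fun x => g x + h x) ≤ lpE p g + lpE p h :=
  ENNReal.lintegral_Lp_add_le hg.aemeasurable hh.aemeasurable hp

theorem lpE_const_mul {p : ℝ} (hp : 1 ≤ p) (c : ENNReal) {g : ℝ → ENNReal} (hg : Measurable g) :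
    lpE p (fun x => c * g x) = c * lpE p g := by
  have hp0 : 0 ≤ p := by linarith
  unfold lpE
  simp_rw [ENNReal.mul_rpow_of_nonneg _ _ hp0]
  rw [lintegral_const_mul _ (hg.pow_const p), ENNReal.mul_rpow_of_nonneg _ _ (by positivity),
    ← ENNReal.rpow_mul, mul_one_div_cancel (by linarith), ENNReal.rpow_one]

theorem lpE_rpow {p : ℝ} (hp : 1 ≤ p) (g : ℝ → ENNReal) : lpE p g ^ p = ∫⁻ x, g x ^ p := by
  unfold lpE
  rw [← ENNReal.rpow_mul, one_div_mul_cancel (by linarith), ENNReal.rpow_one]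

theorem ofReal_abs_rpow {p : ℝ} (hp : 1 ≤ p) (a : ℝ) :
    ENNReal.ofReal (|a| ^ p) = ‖a‖ₑ ^ p := by
  rw [← ENNReal.ofReal_rpow_of_nonneg (abs_nonneg _) (by linarith), Real.enorm_eq_ofReal_abs]

/-- Equality holds for measurable `g`; for non-measurable `g` the left side is the junk value `0`. -/
theorem pNorm_le_lpE {p : ℝ} (hp : 1 ≤ p) (g : ℝ → ℝ) :
    pNorm p g ≤ (lpE p (fun x => ‖g x‖ₑ)).toReal := by
  unfold pNorm lpE
  have hp0 : 0 < p := by linarith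
  by_cases hm : AEStronglyMeasurable (fun x => |g x| ^ p) volume
  · rw [integral_eq_lintegral_of_nonneg_ae (.of_forall fun x => by positivity) hm]
    simp_rw [ofReal_abs_rpow hp]
    rw [ENNReal.toReal_rpow]
  · rw [integral_non_aestronglyMeasurable hm, Real.zero_rpow (by positivity)]
    exact ENNReal.toReal_nonneg

theorem pNorm_eq_lpE {p : ℝ} (hp : 1 ≤ p) {g : ℝ → ℝ} (hg : Measurable g) :
    pNorm p g = (lpE p (fun x => ‖g x‖ₑ)).toReal := by
  unfold pNorm lpE
  rw [integral_eq_lintegral_of_nonneg_ae (.of_forall fun x => by positivity)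
    (hg.abs.pow_const p).aestronglyMeasurable]
  simp_rw [ofReal_abs_rpow hp]
  rw [ENNReal.toReal_rpow]

theorem pNorm_nonneg (p : ℝ) (g : ℝ → ℝ) : 0 ≤ pNorm p g :=
  Real.rpow_nonneg (integral_nonneg fun x => by positivity) _

theorem lpE_ne_top {p : ℝ} (hp : 1 ≤ p) {f : ℝ → ℝ} (hfp : Integrable (fun x : ℝ => |f x| ^ p)) :
    lpE p (fun x => ‖f x‖ₑ) ≠ ⊤ := by
  unfold lpE
  refine ENNReal.rpow_ne_top_of_nonneg (by positivity) ?_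
  have h := hfp.lintegral_lt_top.ne
  simpa only [ofReal_abs_rpow hp] using h

theorem lpE_comp_add {p : ℝ} (g : ℝ → ENNReal) (s : ℝ) :
    lpE p (fun x => g (x + s)) = lpE p g := by
  unfold lpE
  rw [lintegral_add_right_eq_self (fun x => g x ^ p) s]

theorem lpE_shift_le {p : ℝ} (hp : 1 ≤ p) {f : ℝ → ℝ} (hf : Measurable f) (s : ℝ) :
    lpE p (fun x => ‖f (x + s) - f x‖ₑ) ≤ 2 * lpE p (fun x => ‖f x‖ₑ) := by
  refine (lpE_mono hp (h := fun x => ‖f (x + s)‖ₑ + ‖f x‖ₑ) fun x => enorm_sub_le).trans ?_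
  refine (lpE_add_le hp (by fun_prop) (by fun_prop)).trans ?_
  rw [lpE_comp_add (fun x => ‖f x‖ₑ) s, two_mul]

/-- The supremum defining `omegaP` is genuine: the family is bounded by `2 ‖f‖_p`. -/
theorem lpE_shift_le_omegaP {p : ℝ} (hp : 1 ≤ p) {f : ℝ → ℝ} (hf : Measurable f)
    (hfp : Integrable (fun x : ℝ => |f x| ^ p)) {s d : ℝ} (hs : |s| ≤ d) :
    lpE p (fun x => ‖f (x + s) - f x‖ₑ) ≤ ENNReal.ofReal (omegaP p f d) := by
  have htop : 2 * lpE p (fun x => ‖f x‖ₑ) ≠ ⊤ :=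
    ENNReal.mul_ne_top (by simp) (lpE_ne_top hp hfp)
  have hne : ∀ s, lpE p (fun x => ‖f (x + s) - f x‖ₑ) ≠ ⊤ := fun s =>
    ne_top_of_le_ne_top htop (lpE_shift_le hp hf s)
  have hpn : ∀ s, pNorm p (fun x => f (x + s) - f x)
      = (lpE p (fun x => ‖f (x + s) - f x‖ₑ)).toReal := fun s =>
    pNorm_eq_lpE hp (by fun_prop)
  have hbdd : BddAbove (Set.range fun s : {s : ℝ // |s| ≤ d} =>
      pNorm p (fun x => f (x + (s : ℝ)) - f x)) := by
    refine ⟨(2 * lpE p (fun x => ‖f x‖ₑ)).toReal, ?_⟩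
    rintro _ ⟨s, rfl⟩
    simp only [hpn]
    exact ENNReal.toReal_mono htop (lpE_shift_le hp hf s)
  rw [← ENNReal.ofReal_toReal (hne s), ← hpn]
  exact ENNReal.ofReal_le_ofReal (le_ciSup hbdd ⟨s, hs⟩)

theorem omegaP_nonneg (p : ℝ) (f : ℝ → ℝ) (d : ℝ) : 0 ≤ omegaP p f d :=
  Real.iSup_nonneg fun _ => pNorm_nonneg _ _

theorem lpE_shift_nsmul_le {p : ℝ} (hp : 1 ≤ p) {f : ℝ → ℝ} (hf : Measurable f) (s : ℝ) (n : ℕ) :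
    lpE p (fun x => ‖f (x + n * s) - f x‖ₑ) ≤ n * lpE p (fun x => ‖f (x + s) - f x‖ₑ) := by
  induction n with
  | zero =>
    have : p ≠ 0 := by linarith
    have hp' : 0 < p := by linarith
    simp [lpE, hp']
  | succ n ih =>
    refine (lpE_mono hp (h := fun x => ‖f ((x + n * s) + s) - f (x + n * s)‖ₑ
      + ‖f (x + n * s) - f x‖ₑ) fun x => ?_).trans ?_
    · refine le_trans (le_of_eq ?_) (enorm_add_le _ _)
      congr 1
      push_cast
      ring_nf
    · refine (lpE_add_le hp (by fun_prop) (by fun_prop)).trans ?_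
      rw [lpE_comp_add (fun x => ‖f (x + s) - f x‖ₑ) (n * s)]
      push_cast
      rw [add_mul, one_mul, add_comm]
      gcongr

/-- The dilation inequality `ω(f, λ/w) ≤ (1 + λ) ω(f, 1/w)`: a shift by `z / w` splits into
`⌊|z|⌋ + 1` equal shifts of length at most `1 / w`. -/
theorem lpE_shift_le_dilation {p : ℝ} (hp : 1 ≤ p) {f : ℝ → ℝ} (hf : Measurable f)
    (hfp : Integrable (fun x : ℝ => |f x| ^ p)) {w : ℝ} (hw : 0 < w) (z : ℝ) :
    lpE p (fun x => ‖f (x + z / w) - f x‖ₑ)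
      ≤ (1 + ‖z‖ₑ) * ENNReal.ofReal (omegaP p f (1 / w)) := by
  set n := ⌊|z|⌋₊ + 1 with hn
  have hn0 : (0 : ℝ) < n := by positivity
  have h1 : |z| < n := by rw [hn]; push_cast; exact Nat.lt_floor_add_one _
  have h2 : (n : ℝ) ≤ 1 + |z| := by
    rw [hn]; push_cast; linarith [Nat.floor_le (abs_nonneg z)]
  have h3 := lpE_shift_nsmul_le hp hf (z / w / n) n
  rw [mul_div_cancel₀ _ hn0.ne'] at h3
  refine h3.trans (mul_le_mul' ?_ (lpE_shift_le_omegaP hp hf hfp ?_))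
  · rw [← ENNReal.ofReal_natCast]
    refine (ENNReal.ofReal_le_ofReal h2).trans ?_
    rw [ENNReal.ofReal_add zero_le_one (abs_nonneg z), ENNReal.ofReal_one,
      Real.enorm_eq_ofReal_abs]
  · rw [abs_div, abs_div, abs_of_pos hw, abs_of_pos hn0, div_div, div_le_div_iff₀ (by positivity) hw]
    nlinarith

/-! ### Jensen inequalities -/

/-- Hölder's inequality against the constant `1`. -/
theorem lintegral_rpow_le {α : Type*} [MeasurableSpace α] (μ : Measure α) {p : ℝ} (hp : 1 ≤ p)
    {g : α → ENNReal} (hg : Measurable g) :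
    (∫⁻ a, g a ∂μ) ^ p ≤ (μ univ) ^ (p - 1) * ∫⁻ a, g a ^ p ∂μ := by
  have hp0 : 0 < p := by linarith
  have h := eLpNorm'_le_eLpNorm'_mul_rpow_measure_univ (μ := μ) (f := g) one_pos hp
    hg.aestronglyMeasurable
  simp only [eLpNorm', enorm_eq_self, ENNReal.rpow_one, div_one] at h
  refine (ENNReal.rpow_le_rpow h hp0.le).trans (le_of_eq ?_)
  rw [ENNReal.mul_rpow_of_nonneg _ _ hp0.le, ← ENNReal.rpow_mul, ← ENNReal.rpow_mul,
    one_div_mul_cancel hp0.ne', ENNReal.rpow_one, mul_comm]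
  congr 2
  field_simp

theorem tsum_mul_rpow_le {p : ℝ} (hp : 1 ≤ p) (a c : ℤ → ENNReal) :
    (∑' k, a k * c k) ^ p ≤ (∑' k, a k) ^ (p - 1) * ∑' k, a k * c k ^ p := by
  have h := lintegral_rpow_le (Measure.count.withDensity a) hp (measurable_of_countable c)
  rw [withDensity_apply _ MeasurableSet.univ, Measure.restrict_univ, lintegral_count,
    lintegral_withDensity_eq_lintegral_mul _ (measurable_of_countable a) (measurable_of_countable c),
    lintegral_withDensity_eq_lintegral_mul _ (measurable_of_countable a)
      (measurable_of_countable _), lintegral_count, lintegral_count] at h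
  exact h

/-- Jensen's inequality for an average over an interval, followed by the weighted sum over `k`. -/
theorem tsum_average_rpow_le {p : ℝ} (hp : 1 ≤ p) (a : ℤ → ENNReal) (I : ℤ → Set ℝ)
    (b : ℤ → ENNReal) (hb : ∀ k, b k * volume (I k) = 1) {g : ℤ → ℝ → ENNReal}
    (hg : ∀ k, Measurable (g k)) :
    (∑' k, a k * (b k * ∫⁻ u in I k, g k u)) ^ p
      ≤ (∑' k, a k) ^ (p - 1) * ∑' k, a k * (b k * ∫⁻ u in I k, g k u ^ p) := by
  refine (tsum_mul_rpow_le hp a _).trans ?_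
  gcongr with k
  have h := lintegral_rpow_le (b k • volume.restrict (I k)) hp (hg k)
  simpa [lintegral_smul_measure, hb] using h

/-! ### Nodes and finiteness of `m_{0,Π}(L)` -/

theorem add_delta_le_of_lt {t : ℤ → ℝ} {δ : ℝ} (hδ : 0 < δ)
    (hgap : ∀ k : ℤ, δ ≤ t (k + 1) - t k) {j k : ℤ} (hjk : j < k) : t j + δ ≤ t k := by
  have hmono : StrictMono t := strictMono_int_of_lt_succ fun k => by linarith [hgap k]
  have h : t (j + 1) ≤ t k := hmono.monotone (by omega)
  linarith [hgap j]

/-- Finiteness of `m_{0,Π}(L)`: away from the origin `L` is dominated by its moment of order `β`,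
and at most one node lies within distance `δ / 3` of a given point, where `L` is bounded. -/
theorem m0_ne_top {t : ℤ → ℝ} {δ : ℝ} (hδ : 0 < δ) (hgap : ∀ k : ℤ, δ ≤ t (k + 1) - t k)
    {L : ℝ → ℝ} (hLnonneg : ∀ x : ℝ, 0 ≤ L x)
    (hLbd : ∃ ε > (0 : ℝ), ∃ B : ℝ, ∀ x : ℝ, |x| ≤ ε → L x ≤ B)
    (hL2 : ∃ β₀ > (0 : ℝ), dMoment t L β₀ < ⊤) :
    (⨆ u : ℝ, ∑' k : ℤ, ENNReal.ofReal (L (u - t k))) ≠ ⊤ := by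
  obtain ⟨ε, hε, B, hB⟩ := hLbd
  obtain ⟨β, hβ, hfin⟩ := hL2
  set η := min ε (δ / 3) with hη
  have hη0 : 0 < η := by positivity
  have hηβ : 0 < η ^ β := Real.rpow_pos_of_pos hη0 _
  have hbound : (⨆ u : ℝ, ∑' k : ℤ, ENNReal.ofReal (L (u - t k)))
      ≤ ENNReal.ofReal ((η ^ β)⁻¹) * dMoment t L β + ENNReal.ofReal B := by
    refine iSup_le fun u => ?_
    have hterm : ∀ k : ℤ, ENNReal.ofReal (L (u - t k)) ≤
        ENNReal.ofReal ((η ^ β)⁻¹) * ENNReal.ofReal (L (u - t k) * |u - t k| ^ β)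
          + {k : ℤ | |u - t k| ≤ η}.indicator (fun _ => ENNReal.ofReal B) k := by
      intro k
      by_cases hk : |u - t k| ≤ η
      · rw [Set.indicator_of_mem (show k ∈ {k : ℤ | |u - t k| ≤ η} from hk)]
        exact le_add_left (ENNReal.ofReal_le_ofReal (hB _ (hk.trans (min_le_left _ _))))
      · refine le_add_right ?_
        rw [← ENNReal.ofReal_mul (by positivity)]
        refine ENNReal.ofReal_le_ofReal ?_
        have h1 : η ^ β ≤ |u - t k| ^ β :=
          Real.rpow_le_rpow hη0.le (not_le.1 hk).le hβ.le
        rw [inv_mul_eq_div, le_div_iff₀ hηβ]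
        exact mul_le_mul_of_nonneg_left h1 (hLnonneg _)
    refine (ENNReal.tsum_le_tsum hterm).trans ?_
    rw [ENNReal.tsum_add, ENNReal.tsum_mul_left]
    refine add_le_add (mul_le_mul_right (le_iSup (fun u : ℝ => ∑' k : ℤ,
      ENNReal.ofReal (L (u - t k) * |u - t k| ^ β)) u) _) ?_
    by_cases hex : ∃ k₀ : ℤ, |u - t k₀| ≤ η
    · obtain ⟨k₀, hk₀⟩ := hex
      rw [tsum_eq_single k₀]
      · exact Set.indicator_le_self _ _ _
      · intro k hk
        refine Set.indicator_of_notMem (fun hmem => ?_) _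
        have hk' : |u - t k| ≤ η := hmem
        have hη3 : η ≤ δ / 3 := min_le_right _ _
        rw [abs_le] at hk' hk₀
        rcases lt_or_gt_of_ne hk with h | h
        · linarith [add_delta_le_of_lt hδ hgap h, hk'.1, hk'.2, hk₀.1, hk₀.2]
        · linarith [add_delta_le_of_lt hδ hgap h, hk'.1, hk'.2, hk₀.1, hk₀.2]
    · push Not at hex
      have : ∀ k : ℤ, {k : ℤ | |u - t k| ≤ η}.indicator (fun _ => ENNReal.ofReal B) k = 0 :=
        fun k => Set.indicator_of_notMem
          (fun hmem : k ∈ {k : ℤ | |u - t k| ≤ η} => absurd hmem (not_le.2 (hex k))) _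
      simp [this]
  exact ne_top_of_le_ne_top
    (ENNReal.add_ne_top.2 ⟨ENNReal.mul_ne_top ENNReal.ofReal_ne_top hfin.ne,
      ENNReal.ofReal_ne_top⟩) hbound

/-! ### Pointwise estimate of `S_w f - f` -/

/-- The part of the majorant of `|S_w f - f|` in which `f` at a point `u` of the `k`-th cell is
compared with its translate by `x - t_k / w`. The exponent `q` is `1` in the majorant and `p` after
Jensen's inequality. -/
def cellShift (t : ℤ → ℝ) (L f : ℝ → ℝ) (w q x : ℝ) : ENNReal :=
  ∑' k : ℤ, ENNReal.ofReal (L (w * x - t k)) * (ENNReal.ofReal (w / (t (k + 1) - t k)) *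
    ∫⁻ u in Ioc (t k / w) (t (k + 1) / w), ‖f (u + (x - t k / w)) - f u‖ₑ ^ q)

/-- The part of the majorant of `|S_w f - f|` in which `f x` is compared with its translates by
the offset `u - t_k / w` inside the `k`-th cell. The exponent `q` is `1` in the majorant and `p`
after Jensen's inequality. -/
def pointShift (t : ℤ → ℝ) (L f : ℝ → ℝ) (w q x : ℝ) : ENNReal :=
  ∑' k : ℤ, ENNReal.ofReal (L (w * x - t k)) * (ENNReal.ofReal (w / (t (k + 1) - t k)) *
    ∫⁻ u in Ioc (t k / w) (t (k + 1) / w), ‖f (x + (u - t k / w)) - f x‖ₑ ^ q)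

theorem measurable_cellShift (t : ℤ → ℝ) {L f : ℝ → ℝ} (hL : Measurable L) (hf : Measurable f)
    (w q : ℝ) : Measurable (cellShift t L f w q) := by
  refine Measurable.tsum fun k => ?_
  refine Measurable.mul (by fun_prop) (Measurable.const_mul ?_ _)
  exact Measurable.lintegral_prod_right'
    (f := fun z : ℝ × ℝ => ‖f (z.2 + (z.1 - t k / w)) - f z.2‖ₑ ^ q) (by fun_prop)

theorem measurable_pointShift (t : ℤ → ℝ) {L f : ℝ → ℝ} (hL : Measurable L) (hf : Measurable f)
    (w q : ℝ) : Measurable (pointShift t L f w q) := by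
  refine Measurable.tsum fun k => ?_
  refine Measurable.mul (by fun_prop) (Measurable.const_mul ?_ _)
  exact Measurable.lintegral_prod_right'
    (f := fun z : ℝ × ℝ => ‖f (z.1 + (z.2 - t k / w)) - f z.1‖ₑ ^ q) (by fun_prop)

theorem enorm_average_sub_le {f : ℝ → ℝ} (hfmeas : Measurable f) (hfloc : LocallyIntegrable f)
    {a b w : ℝ} (hw : 0 < w) (hab : a < b) (x : ℝ) :
    ‖(w / (b - a)) * (∫ u in (a / w)..(b / w), f u) - f x‖ₑ
      ≤ ENNReal.ofReal (w / (b - a)) *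
          (∫⁻ u in Ioc (a / w) (b / w), ‖f (u + (x - a / w)) - f u‖ₑ)
        + ENNReal.ofReal (w / (b - a)) *
          ∫⁻ u in Ioc (a / w) (b / w), ‖f (x + (u - a / w)) - f x‖ₑ := by
  have hba : 0 < b - a := sub_pos.2 hab
  have hle : a / w ≤ b / w := by gcongr
  have hint : IntervalIntegrable f volume (a / w) (b / w) :=
    (hfloc.integrableOn_isCompact isCompact_uIcc).intervalIntegrable
  have heq : (w / (b - a)) * (∫ u in (a / w)..(b / w), f u) - f x
      = (w / (b - a)) * ∫ u in (a / w)..(b / w), (f u - f x) := by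
    rw [intervalIntegral.integral_sub hint intervalIntegrable_const,
      intervalIntegral.integral_const, smul_eq_mul]
    field_simp
  rw [heq, enorm_mul, Real.enorm_eq_ofReal (by positivity), ← mul_add,
    intervalIntegral.integral_of_le hle, ← lintegral_add_left (by fun_prop)]
  gcongr
  refine (enorm_integral_le_lintegral_enorm _).trans (lintegral_mono fun u => ?_)
  have h : f u - f x = (f (x + (u - a / w)) - f x) - (f (u + (x - a / w)) - f u) := by
    rw [show u + (x - a / w) = x + (u - a / w) by ring]
    ring
  rw [h]
  refine enorm_sub_le.trans (le_of_eq ?_)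
  exact add_comm _ _

/-- The pointwise estimate: comparison of `S_w f x` with `∑ χ (w x - t_k, f x)` by the Lipschitz
condition, and of the latter with `f x` by condition (χ4). -/
theorem enorm_SwOp_sub_le {t : ℤ → ℝ} {χ : ℝ → ℝ → ℝ} {L : ℝ → ℝ} {f : ℝ → ℝ} {w C : ℝ}
    (hw : 0 < w) (ht : ∀ k : ℤ, t k < t (k + 1))
    (hχ1 : ∀ x u : ℝ, Summable (fun k : ℤ => χ (w * x - t k) u))
    (hχ2 : ∀ x : ℝ, χ x 0 = 0) (hLnonneg : ∀ x : ℝ, 0 ≤ L x)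
    (hχ3 : ∀ x u v : ℝ, |χ x u - χ x v| ≤ L x * |u - v|)
    (hχ4 : ∀ x u : ℝ, u ≠ 0 → |(∑' k : ℤ, χ (w * x - t k) u) / u - 1| ≤ C)
    (hfmeas : Measurable f) (hfloc : LocallyIntegrable f)
    (hconv : ∀ x : ℝ, Summable (fun k : ℤ => χ (w * x - t k)
      ((w / (t (k + 1) - t k)) * ∫ u in (t k / w)..(t (k + 1) / w), f u))) (x : ℝ) :
    ‖SwOp t χ f w x - f x‖ₑ ≤ cellShift t L f w 1 x + pointShift t L f w 1 x
      + ENNReal.ofReal C * ‖f x‖ₑ := by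
  have hsplit : SwOp t χ f w x - f x =
      (∑' k : ℤ, (χ (w * x - t k)
        ((w / (t (k + 1) - t k)) * ∫ u in (t k / w)..(t (k + 1) / w), f u)
          - χ (w * x - t k) (f x)))
      + ((∑' k : ℤ, χ (w * x - t k) (f x)) - f x) := by
    rw [(hconv x).tsum_sub (hχ1 x (f x)), SwOp]
    ring
  rw [hsplit]
  refine (enorm_add_le _ _).trans (add_le_add ?_ ?_)
  · refine enorm_tsum_le_tsum_enorm.trans ?_
    simp only [cellShift, pointShift, ENNReal.rpow_one]
    rw [← ENNReal.tsum_add]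
    refine ENNReal.tsum_le_tsum fun k => ?_
    rw [← mul_add]
    refine le_trans ?_ (mul_le_mul_right (enorm_average_sub_le hfmeas hfloc hw (ht k) x) _)
    rw [Real.enorm_eq_ofReal_abs, Real.enorm_eq_ofReal_abs, ← ENNReal.ofReal_mul (hLnonneg _)]
    exact ENNReal.ofReal_le_ofReal (hχ3 _ _ _)
  · by_cases hfx : f x = 0
    · simp [hfx, hχ2]
    · have h := hχ4 x (f x) hfx
      have hC : 0 ≤ C := (abs_nonneg _).trans h
      rw [Real.enorm_eq_ofReal_abs, Real.enorm_eq_ofReal_abs, ← ENNReal.ofReal_mul hC]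
      refine ENNReal.ofReal_le_ofReal ?_
      have heq : (∑' k : ℤ, χ (w * x - t k) (f x)) - f x
          = ((∑' k : ℤ, χ (w * x - t k) (f x)) / f x - 1) * f x := by
        field_simp
      rw [heq, abs_mul]
      gcongr

/-! ### Integrating the two majorants -/

theorem cell_mass {a b w : ℝ} (hw : 0 < w) (hab : a < b) :
    ENNReal.ofReal (w / (b - a)) * volume (Ioc (a / w) (b / w)) = 1 := by
  have hba : 0 < b - a := sub_pos.2 hab
  rw [Real.volume_Ioc, ← ENNReal.ofReal_mul (by positivity), ← sub_div]
  rw [div_mul_div_cancel₀' hw.ne', div_self hba.ne', ENNReal.ofReal_one]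

theorem cellShift_rpow_le {t : ℤ → ℝ} {L f : ℝ → ℝ} {w p : ℝ} (hp : 1 ≤ p) (hw : 0 < w)
    (ht : ∀ k : ℤ, t k < t (k + 1)) (hf : Measurable f) (x : ℝ) :
    cellShift t L f w 1 x ^ p
      ≤ (⨆ u : ℝ, ∑' k : ℤ, ENNReal.ofReal (L (u - t k))) ^ (p - 1) * cellShift t L f w p x := by
  simp only [cellShift, ENNReal.rpow_one]
  refine (tsum_average_rpow_le hp _ _ _ (fun k => cell_mass hw (ht k))
    (fun k => by fun_prop)).trans ?_
  have hp1 : 0 ≤ p - 1 := by linarith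
  gcongr
  exact le_iSup (fun u : ℝ => ∑' k : ℤ, ENNReal.ofReal (L (u - t k))) (w * x)

theorem pointShift_rpow_le {t : ℤ → ℝ} {L f : ℝ → ℝ} {w p : ℝ} (hp : 1 ≤ p) (hw : 0 < w)
    (ht : ∀ k : ℤ, t k < t (k + 1)) (hf : Measurable f) (x : ℝ) :
    pointShift t L f w 1 x ^ p
      ≤ (⨆ u : ℝ, ∑' k : ℤ, ENNReal.ofReal (L (u - t k))) ^ (p - 1) * pointShift t L f w p x := by
  simp only [pointShift, ENNReal.rpow_one]
  refine (tsum_average_rpow_le hp _ _ _ (fun k => cell_mass hw (ht k))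
    (fun k => by fun_prop)).trans ?_
  have hp1 : 0 ≤ p - 1 := by linarith
  gcongr
  exact le_iSup (fun u : ℝ => ∑' k : ℤ, ENNReal.ofReal (L (u - t k))) (w * x)

theorem lintegral_comp_mul_left_pos {w : ℝ} (hw : 0 < w) {h : ℝ → ENNReal} (hh : Measurable h) :
    ∫⁻ y, h (w * y) = ENNReal.ofReal w⁻¹ * ∫⁻ z, h z := by
  rw [← lintegral_map (g := fun y => w * y) hh (by fun_prop), Real.map_volume_mul_left hw.ne',
    lintegral_smul_measure, abs_of_pos (by positivity), smul_eq_mul]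

/-- After the substitution `y = x - t_k / w` the cells reassemble into the whole line, leaving the
`L`-average of `‖f(· + z / w) - f‖_p ^ p`. -/
theorem lintegral_cellShift_le {t : ℤ → ℝ} {δ : ℝ} (hδ : 0 < δ)
    (hgap : ∀ k : ℤ, δ ≤ t (k + 1) - t k) {L f : ℝ → ℝ} (hL : Measurable L) (hf : Measurable f)
    {w p : ℝ} (hw : 0 < w) :
    ∫⁻ x, cellShift t L f w p x ≤ ENNReal.ofReal δ⁻¹ *
      ∫⁻ z, ENNReal.ofReal (L z) * ∫⁻ u, ‖f (u + z / w) - f u‖ₑ ^ p := by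
  have hmono : Monotone fun k => t k / w := by
    refine monotone_int_of_le_succ fun k => ?_
    have := hgap k
    gcongr
    linarith
  have hinner : ∀ k : ℤ, Measurable fun y : ℝ =>
      ∫⁻ u in Ioc (t k / w) (t (k + 1) / w), ‖f (u + y) - f u‖ₑ ^ p := fun k =>
    Measurable.lintegral_prod_right' (f := fun z : ℝ × ℝ => ‖f (z.2 + z.1) - f z.2‖ₑ ^ p)
      (by fun_prop)
  have hinner' : Measurable fun z : ℝ => ∫⁻ u, ‖f (u + z / w) - f u‖ₑ ^ p :=
    Measurable.lintegral_prod_right' (f := fun z : ℝ × ℝ => ‖f (z.2 + z.1 / w) - f z.2‖ₑ ^ p)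
      (by fun_prop)
  have hterm : ∀ k : ℤ, Measurable fun y : ℝ => ENNReal.ofReal (L (w * y)) *
      (ENNReal.ofReal (w / (t (k + 1) - t k)) *
        ∫⁻ u in Ioc (t k / w) (t (k + 1) / w), ‖f (u + y) - f u‖ₑ ^ p) := fun k =>
    Measurable.mul (by fun_prop) ((hinner k).const_mul _)
  have hshift : ∀ k : ℤ, ∀ x : ℝ, w * x - t k = w * (x - t k / w) := fun k x => by
    field_simp
  calc ∫⁻ x, cellShift t L f w p x
      = ∑' k : ℤ, ∫⁻ y, ENNReal.ofReal (L (w * y)) * (ENNReal.ofReal (w / (t (k + 1) - t k)) *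
          ∫⁻ u in Ioc (t k / w) (t (k + 1) / w), ‖f (u + y) - f u‖ₑ ^ p) := by
        simp only [cellShift, hshift]
        refine (lintegral_tsum fun k =>
          ((hterm k).comp (measurable_id.sub_const (t k / w))).aemeasurable).trans ?_
        refine tsum_congr fun k => ?_
        exact lintegral_sub_right_eq_self (fun y => ENNReal.ofReal (L (w * y)) *
          (ENNReal.ofReal (w / (t (k + 1) - t k)) *
          ∫⁻ u in Ioc (t k / w) (t (k + 1) / w), ‖f (u + y) - f u‖ₑ ^ p)) (t k / w)
    _ = ∫⁻ y, ∑' k : ℤ, ENNReal.ofReal (L (w * y)) * (ENNReal.ofReal (w / (t (k + 1) - t k)) *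
          ∫⁻ u in Ioc (t k / w) (t (k + 1) / w), ‖f (u + y) - f u‖ₑ ^ p) :=
        (lintegral_tsum fun k => (hterm k).aemeasurable).symm
    _ ≤ ∫⁻ y, ENNReal.ofReal (w / δ) * (ENNReal.ofReal (L (w * y)) *
          ∫⁻ u, ‖f (u + (w * y) / w) - f u‖ₑ ^ p) := by
        refine lintegral_mono fun y => ?_
        simp only
        rw [ENNReal.tsum_mul_left, mul_left_comm]
        gcongr
        rw [mul_div_cancel_left₀ _ hw.ne']
        calc ∑' k : ℤ, ENNReal.ofReal (w / (t (k + 1) - t k)) *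
              ∫⁻ u in Ioc (t k / w) (t (k + 1) / w), ‖f (u + y) - f u‖ₑ ^ p
            ≤ ∑' k : ℤ, ENNReal.ofReal (w / δ) *
              ∫⁻ u in Ioc (t k / w) (t (k + 1) / w), ‖f (u + y) - f u‖ₑ ^ p := by
              gcongr with k
              exact hgap k
          _ = ENNReal.ofReal (w / δ) *
              ∫⁻ u in ⋃ k : ℤ, Ioc (t k / w) (t (k + 1) / w), ‖f (u + y) - f u‖ₑ ^ p := by
              rw [ENNReal.tsum_mul_left]
              congr 1
              exact (lintegral_iUnion (fun k => measurableSet_Ioc)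
                hmono.pairwise_disjoint_on_Ioc_succ _).symm
          _ ≤ ENNReal.ofReal (w / δ) * ∫⁻ u, ‖f (u + y) - f u‖ₑ ^ p := by
              gcongr
              exact Measure.restrict_le_self
    _ = _ := by
        have hm : Measurable fun z => ENNReal.ofReal (L z) * ∫⁻ u, ‖f (u + z / w) - f u‖ₑ ^ p :=
          Measurable.mul (by fun_prop) hinner'
        refine (lintegral_const_mul _ (hm.comp (measurable_const_mul w))).trans ?_
        simp only [Function.comp_def]
        rw [lintegral_comp_mul_left_pos hw hm, ← mul_assoc, ← ENNReal.ofReal_mul (by positivity)]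
        congr 2
        field_simp

/-- After the substitution `v = u - t_k / w` every cell is contained in `(0, Δ / w]`, so the
integral no longer depends on `k` and the weights sum to at most `m_{0,Π}(L)`. -/
theorem lintegral_pointShift_le {t : ℤ → ℝ} {δ Δ : ℝ} (hδ : 0 < δ)
    (hgap : ∀ k : ℤ, δ ≤ t (k + 1) - t k ∧ t (k + 1) - t k ≤ Δ) {L f : ℝ → ℝ}
    (hf : Measurable f) {w p : ℝ} (hw : 0 < w) :
    ∫⁻ x, pointShift t L f w p x ≤ (⨆ u : ℝ, ∑' k : ℤ, ENNReal.ofReal (L (u - t k))) *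
      (ENNReal.ofReal (w / δ) * ∫⁻ v in Ioc 0 (Δ / w), ∫⁻ x, ‖f (x + v) - f x‖ₑ ^ p) := by
  have hcell : ∀ (x : ℝ) (k : ℤ),
      ∫⁻ u in Ioc (t k / w) (t (k + 1) / w), ‖f (x + (u - t k / w)) - f x‖ₑ ^ p
        ≤ ∫⁻ v in Ioc 0 (Δ / w), ‖f (x + v) - f x‖ₑ ^ p := by
    intro x k
    rw [← lintegral_indicator measurableSet_Ioc, ← lintegral_indicator measurableSet_Ioc,
      ← lintegral_sub_right_eq_self
        ((Ioc 0 (Δ / w)).indicator fun v => ‖f (x + v) - f x‖ₑ ^ p) (t k / w)]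
    refine lintegral_mono fun u => ?_
    by_cases hu : u ∈ Ioc (t k / w) (t (k + 1) / w)
    swap
    · simp [Set.indicator_of_notMem hu]
    rw [Set.indicator_of_mem hu, Set.indicator_of_mem (a := u - t k / w)]
    have h : (t (k + 1) - t k) / w ≤ Δ / w := by
      gcongr
      exact (hgap k).2
    rw [sub_div] at h
    exact ⟨by linarith [hu.1], by linarith [hu.2]⟩
  have hm : Measurable fun x : ℝ => ∫⁻ v in Ioc 0 (Δ / w), ‖f (x + v) - f x‖ₑ ^ p :=
    Measurable.lintegral_prod_right' (f := fun z : ℝ × ℝ => ‖f (z.1 + z.2) - f z.1‖ₑ ^ p)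
      (by fun_prop)
  calc ∫⁻ x, pointShift t L f w p x
      ≤ ∫⁻ x, (⨆ u : ℝ, ∑' k : ℤ, ENNReal.ofReal (L (u - t k))) *
        (ENNReal.ofReal (w / δ) * ∫⁻ v in Ioc 0 (Δ / w), ‖f (x + v) - f x‖ₑ ^ p) := by
        refine lintegral_mono fun x => ?_
        refine le_trans ?_ (mul_le_mul_left
          (le_iSup (fun u : ℝ => ∑' k : ℤ, ENNReal.ofReal (L (u - t k))) (w * x)) _)
        rw [← ENNReal.tsum_mul_right]
        unfold pointShift
        refine ENNReal.tsum_le_tsum fun k => mul_le_mul_right (mul_le_mul' ?_ (hcell x k)) _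
        gcongr
        exact (hgap k).1
    _ = _ := by
        rw [lintegral_const_mul _ (hm.const_mul _), lintegral_const_mul _ hm,
          lintegral_lintegral_swap]
        exact Measurable.aemeasurable (by unfold Function.uncurry; fun_prop)

/-! ### The three terms of the estimate -/

theorem lintegral_kernel_moment {L : ℝ → ℝ} (hLnonneg : ∀ x : ℝ, 0 ≤ L x) (hL1 : Integrable L)
    {p : ℝ} (hp : 1 ≤ p) (hMp : Integrable (fun u : ℝ => L u * |u| ^ p)) :
    ∫⁻ z, ENNReal.ofReal (L z) * (1 + ‖z‖ₑ ^ p)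
      = ENNReal.ofReal ((∫ u : ℝ, L u) + ∫ u : ℝ, L u * |u| ^ p) := by
  have hsum : Integrable fun u : ℝ => L u + L u * |u| ^ p := hL1.add hMp
  rw [← integral_add hL1 hMp, ofReal_integral_eq_lintegral_ofReal hsum
    (.of_forall fun z => add_nonneg (hLnonneg z) (mul_nonneg (hLnonneg z) (by positivity)))]
  refine lintegral_congr fun z => ?_
  rw [mul_add, mul_one, ← ofReal_abs_rpow hp, ← ENNReal.ofReal_mul (hLnonneg z),
    ← ENNReal.ofReal_add (hLnonneg z) (mul_nonneg (hLnonneg z) (by positivity))]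

theorem lpE_cellShift_le {t : ℤ → ℝ} {δ : ℝ} (hδ : 0 < δ)
    (hgap : ∀ k : ℤ, δ ≤ t (k + 1) - t k) {L f : ℝ → ℝ} (hL : Measurable L)
    (hLnonneg : ∀ x : ℝ, 0 ≤ L x) (hL1 : Integrable L) (hf : Measurable f)
    {w p : ℝ} (hp : 1 ≤ p) (hMp : Integrable (fun u : ℝ => L u * |u| ^ p))
    (hfp : Integrable (fun x : ℝ => |f x| ^ p)) (hw : 0 < w)
    (hm : (⨆ u : ℝ, ∑' k : ℤ, ENNReal.ofReal (L (u - t k))) ≠ ⊤) :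
    lpE p (cellShift t L f w 1) ≤ ENNReal.ofReal (δ ^ (-(1 / p)) * (2 * m0R t L) ^ ((p - 1) / p)
      * ((∫ u : ℝ, L u) + ∫ u : ℝ, L u * |u| ^ p) ^ (1 / p) * omegaP p f (1 / w)) := by
  have hp0 : 0 < p := by linarith
  have hp1 : 0 ≤ p - 1 := by linarith
  have ht : ∀ k : ℤ, t k < t (k + 1) := fun k => by linarith [hgap k]
  set K := (∫ u : ℝ, L u) + ∫ u : ℝ, L u * |u| ^ p with hK
  have hK0 : 0 ≤ K := add_nonneg (integral_nonneg hLnonneg)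
    (integral_nonneg fun z => mul_nonneg (hLnonneg z) (by positivity))
  set Ω := omegaP p f (1 / w) with hΩ
  have hΩ0 : 0 ≤ Ω := omegaP_nonneg _ _ _
  set m := m0R t L with hmdef
  have hm0 : 0 ≤ m := ENNReal.toReal_nonneg
  have hmM : (⨆ u : ℝ, ∑' k : ℤ, ENNReal.ofReal (L (u - t k))) = ENNReal.ofReal m :=
    (ENNReal.ofReal_toReal hm).symm
  have hz : ∀ z : ℝ, ∫⁻ u, ‖f (u + z / w) - f u‖ₑ ^ p
      ≤ ENNReal.ofReal (2 ^ (p - 1) * Ω ^ p) * (1 + ‖z‖ₑ ^ p) := by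
    intro z
    rw [← lpE_rpow hp fun u => ‖f (u + z / w) - f u‖ₑ]
    refine (ENNReal.rpow_le_rpow (lpE_shift_le_dilation hp hf hfp hw z) hp0.le).trans ?_
    rw [ENNReal.mul_rpow_of_nonneg _ _ hp0.le, ENNReal.ofReal_mul (by positivity),
      ← ENNReal.ofReal_rpow_of_nonneg hΩ0 hp0.le,
      ← ENNReal.ofReal_rpow_of_nonneg zero_le_two hp1, ENNReal.ofReal_ofNat, mul_right_comm]
    gcongr
    simpa using ENNReal.rpow_add_le_mul_rpow_add_rpow 1 ‖z‖ₑ hp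
  have hint : ∫⁻ x, cellShift t L f w 1 x ^ p
      ≤ ENNReal.ofReal (m ^ (p - 1) * (δ⁻¹ * (2 ^ (p - 1) * Ω ^ p * K))) := by
    calc ∫⁻ x, cellShift t L f w 1 x ^ p
        ≤ ∫⁻ x, ENNReal.ofReal m ^ (p - 1) * cellShift t L f w p x := by
          rw [← hmM]
          exact lintegral_mono fun x => cellShift_rpow_le hp hw ht hf x
      _ = ENNReal.ofReal m ^ (p - 1) * ∫⁻ x, cellShift t L f w p x :=
          lintegral_const_mul _ (measurable_cellShift t hL hf w p)
      _ ≤ ENNReal.ofReal m ^ (p - 1) * (ENNReal.ofReal δ⁻¹ *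
            ∫⁻ z, ENNReal.ofReal (L z) * ∫⁻ u, ‖f (u + z / w) - f u‖ₑ ^ p) := by
          gcongr
          exact lintegral_cellShift_le hδ hgap hL hf hw
      _ ≤ ENNReal.ofReal m ^ (p - 1) * (ENNReal.ofReal δ⁻¹ *
            ∫⁻ z, ENNReal.ofReal (2 ^ (p - 1) * Ω ^ p) *
              (ENNReal.ofReal (L z) * (1 + ‖z‖ₑ ^ p))) := by
          refine mul_le_mul_right (mul_le_mul_right (lintegral_mono fun z => ?_) _) _
          simp only
          rw [mul_left_comm]
          gcongr
          exact hz z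
      _ = _ := by
          rw [lintegral_const_mul _ (by fun_prop), lintegral_kernel_moment hLnonneg hL1 hp hMp,
            ENNReal.ofReal_rpow_of_nonneg hm0 hp1, ← ENNReal.ofReal_mul (by positivity),
            ← ENNReal.ofReal_mul (by positivity), ← ENNReal.ofReal_mul (by positivity)]
  unfold lpE
  refine (ENNReal.rpow_le_rpow hint (by positivity)).trans (le_of_eq ?_)
  rw [ENNReal.ofReal_rpow_of_nonneg (by positivity) (by positivity)]
  congr 1
  rw [Real.mul_rpow (by positivity) (by positivity), Real.mul_rpow (by positivity) (by positivity),
    Real.mul_rpow (by positivity) (by positivity), Real.mul_rpow (by positivity) (by positivity),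
    ← Real.rpow_mul hm0, ← Real.rpow_mul zero_le_two, ← Real.rpow_mul hΩ0,
    mul_one_div_cancel hp0.ne', Real.rpow_one, Real.mul_rpow zero_le_two hm0, mul_one_div,
    Real.rpow_neg hδ.le, Real.inv_rpow hδ.le]
  ring

theorem lpE_pointShift_le {t : ℤ → ℝ} {δ Δ : ℝ} (hδ : 0 < δ) (hδΔ : δ ≤ Δ)
    (hgap : ∀ k : ℤ, δ ≤ t (k + 1) - t k ∧ t (k + 1) - t k ≤ Δ) {L f : ℝ → ℝ}
    (hL : Measurable L) (hf : Measurable f)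
    {w p : ℝ} (hp : 1 ≤ p) (hfp : Integrable (fun x : ℝ => |f x| ^ p)) (hw : 0 < w)
    (hm : (⨆ u : ℝ, ∑' k : ℤ, ENNReal.ofReal (L (u - t k))) ≠ ⊤) :
    lpE p (pointShift t L f w 1)
      ≤ ENNReal.ofReal (δ ^ (-(1 / p)) * m0R t L * Δ ^ (1 / p) * omegaP p f (Δ / w)) := by
  have hp0 : 0 < p := by linarith
  have hp1 : 0 ≤ p - 1 := by linarith
  have hΔ : 0 < Δ := hδ.trans_le hδΔ
  have ht : ∀ k : ℤ, t k < t (k + 1) := fun k => by linarith [(hgap k).1]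
  set Ω := omegaP p f (Δ / w) with hΩ
  have hΩ0 : 0 ≤ Ω := omegaP_nonneg _ _ _
  set m := m0R t L with hmdef
  have hm0 : 0 ≤ m := ENNReal.toReal_nonneg
  have hmM : (⨆ u : ℝ, ∑' k : ℤ, ENNReal.ofReal (L (u - t k))) = ENNReal.ofReal m :=
    (ENNReal.ofReal_toReal hm).symm
  have hv : ∫⁻ v in Ioc 0 (Δ / w), ∫⁻ x, ‖f (x + v) - f x‖ₑ ^ p
      ≤ ENNReal.ofReal (Ω ^ p * (Δ / w)) := by
    calc ∫⁻ v in Ioc 0 (Δ / w), ∫⁻ x, ‖f (x + v) - f x‖ₑ ^ p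
        ≤ ∫⁻ _ in Ioc 0 (Δ / w), ENNReal.ofReal (Ω ^ p) := by
          refine setLIntegral_mono (by fun_prop) fun v hv => ?_
          rw [← lpE_rpow hp fun x => ‖f (x + v) - f x‖ₑ,
            ← ENNReal.ofReal_rpow_of_nonneg hΩ0 hp0.le]
          gcongr
          exact lpE_shift_le_omegaP hp hf hfp (by rw [abs_of_pos hv.1]; exact hv.2)
      _ = _ := by
          rw [setLIntegral_const, Real.volume_Ioc, sub_zero, ← ENNReal.ofReal_mul (by positivity)]
  have hint : ∫⁻ x, pointShift t L f w 1 x ^ p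
      ≤ ENNReal.ofReal (m ^ (p - 1) * (m * (w / δ * (Ω ^ p * (Δ / w))))) := by
    calc ∫⁻ x, pointShift t L f w 1 x ^ p
        ≤ ∫⁻ x, ENNReal.ofReal m ^ (p - 1) * pointShift t L f w p x := by
          rw [← hmM]
          exact lintegral_mono fun x => pointShift_rpow_le hp hw ht hf x
      _ = ENNReal.ofReal m ^ (p - 1) * ∫⁻ x, pointShift t L f w p x :=
          lintegral_const_mul _ (measurable_pointShift t hL hf w p)
      _ ≤ ENNReal.ofReal m ^ (p - 1) * (ENNReal.ofReal m * (ENNReal.ofReal (w / δ) *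
            ENNReal.ofReal (Ω ^ p * (Δ / w)))) := by
          refine mul_le_mul_right ((lintegral_pointShift_le hδ hgap hf hw).trans ?_) _
          rw [hmM]
          gcongr
      _ = _ := by
          rw [ENNReal.ofReal_rpow_of_nonneg hm0 hp1, ← ENNReal.ofReal_mul (by positivity),
            ← ENNReal.ofReal_mul (by positivity), ← ENNReal.ofReal_mul (by positivity)]
  have hmp : m ^ (p - 1) * m = m ^ p := by
    rcases hm0.eq_or_lt with h | h
    · rw [← h, Real.zero_rpow hp0.ne', mul_zero]
    · rw [← Real.rpow_add_one h.ne', sub_add_cancel]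
  have hval : m ^ (p - 1) * (m * (w / δ * (Ω ^ p * (Δ / w)))) = m ^ p * (δ⁻¹ * (Ω ^ p * Δ)) := by
    rw [← hmp]
    field_simp
  rw [hval] at hint
  unfold lpE
  refine (ENNReal.rpow_le_rpow hint (by positivity)).trans (le_of_eq ?_)
  rw [ENNReal.ofReal_rpow_of_nonneg (by positivity) (by positivity)]
  congr 1
  rw [Real.mul_rpow (by positivity) (by positivity), Real.mul_rpow (by positivity) (by positivity),
    Real.mul_rpow (by positivity) (by positivity), ← Real.rpow_mul hm0, ← Real.rpow_mul hΩ0,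
    mul_one_div_cancel hp0.ne', Real.rpow_one, Real.rpow_one,
    Real.rpow_neg hδ.le, Real.inv_rpow hδ.le]
  ring

/-- Theorem: quantitative estimate in `L^p(ℝ)` for nonlinear sampling Kantorovich
operators whose kernel satisfies (χ3) with `ψ(u) = u`. -/
theorem quantitative_estimate_lp
    (t : ℤ → ℝ) (δ Δ : ℝ) (hδ : 0 < δ) (hδΔ : δ ≤ Δ)
    (hgap : ∀ k : ℤ, δ ≤ t (k + 1) - t k ∧ t (k + 1) - t k ≤ Δ)
    (htop : Tendsto t atTop atTop) (hbot : Tendsto t atBot atBot)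
    (χ : ℝ → ℝ → ℝ) (L : ℝ → ℝ)
    -- (χ1)
    (hχ1 : ∀ x u w : ℝ, 0 < w → Summable (fun k : ℤ => χ (w * x - t k) u))
    -- (χ2)
    (hχ2 : ∀ x : ℝ, χ x 0 = 0)
    -- (χ3) with ψ(u) = u
    (hLmeas : Measurable L) (hLnonneg : ∀ x : ℝ, 0 ≤ L x)
    (hχ3 : ∀ x u v : ℝ, |χ x u - χ x v| ≤ L x * |u - v|)
    -- (χ4)
    (M₂ θ₀ : ℝ) (hM₂ : 0 < M₂) (hθ₀ : 0 < θ₀)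
    (hχ4 : ∃ W : ℝ, ∀ w ≥ W, ∀ x u : ℝ, u ≠ 0 →
      |(∑' k : ℤ, χ (w * x - t k) u) / u - 1| ≤ M₂ * w ^ (-θ₀))
    -- (L1)
    (hL1 : Integrable L)
    (hLbd : ∃ ε > (0 : ℝ), ∃ B : ℝ, ∀ x : ℝ, |x| ≤ ε → L x ≤ B)
    -- (L2)
    (hL2 : ∃ β₀ > (0 : ℝ), dMoment t L β₀ < ⊤)
    -- M_p(L) < +∞
    (p : ℝ) (hp : 1 ≤ p)
    (hMp : Integrable (fun u : ℝ => L u * |u| ^ p))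
    -- f ∈ L^p(ℝ)
    (f : ℝ → ℝ) (hfmeas : Measurable f) (hfloc : LocallyIntegrable f)
    (hfp : Integrable (fun x : ℝ => |f x| ^ p))
    -- the series defining `S_w f` converges everywhere
    (hconv : ∀ w > (0 : ℝ), ∀ x : ℝ, Summable (fun k : ℤ => χ (w * x - t k)
      ((w / (t (k + 1) - t k)) * ∫ u in (t k / w)..(t (k + 1) / w), f u))) :
    ∃ W : ℝ, ∀ w ≥ W,
      pNorm p (fun x => SwOp t χ f w x - f x) ≤
        δ ^ (-(1 / p)) * (2 * m0R t L) ^ ((p - 1) / p)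
            * ((∫ u : ℝ, L u) + ∫ u : ℝ, L u * |u| ^ p) ^ (1 / p)
            * omegaP p f (1 / w)
        + δ ^ (-(1 / p)) * m0R t L * Δ ^ (1 / p) * omegaP p f (Δ / w)
        + M₂ * pNorm p f * w ^ (-θ₀) := by
  obtain ⟨W, hW⟩ := hχ4
  refine ⟨max W 1, fun w hw => ?_⟩
  have hw0 : 0 < w := one_pos.trans_le ((le_max_right _ _).trans hw)
  have hm := m0_ne_top hδ (fun k => (hgap k).1) hLnonneg hLbd hL2
  have hC : 0 ≤ M₂ * w ^ (-θ₀) := by positivity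
  have hK0 : 0 ≤ (∫ u : ℝ, L u) + ∫ u : ℝ, L u * |u| ^ p := add_nonneg (integral_nonneg hLnonneg)
    (integral_nonneg fun z => mul_nonneg (hLnonneg z) (by positivity))
  have hm0 : 0 ≤ m0R t L := ENNReal.toReal_nonneg
  have hΔ : 0 < Δ := hδ.trans_le hδΔ
  have h1 := omegaP_nonneg p f (1 / w)
  have h2 := omegaP_nonneg p f (Δ / w)
  have h3 := pNorm_nonneg p f
  refine (pNorm_le_lpE hp _).trans (ENNReal.toReal_le_of_le_ofReal (by positivity) ?_)
  have hmeas1 := measurable_cellShift t hLmeas hfmeas w 1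
  have hmeas2 := measurable_pointShift t hLmeas hfmeas w 1
  refine (lpE_mono hp (enorm_SwOp_sub_le hw0 (fun k => by linarith [(hgap k).1])
    (fun x u => hχ1 x u w hw0) hχ2 hLnonneg hχ3 (hW w ((le_max_left _ _).trans hw)) hfmeas hfloc
    (hconv w hw0))).trans ?_
  refine (lpE_add_le hp (hmeas1.add hmeas2) (by fun_prop)).trans ?_
  rw [ENNReal.ofReal_add (by positivity) (by positivity),
    ENNReal.ofReal_add (by positivity) (by positivity)]
  refine add_le_add ((lpE_add_le hp hmeas1 hmeas2).trans (add_le_add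
    (lpE_cellShift_le hδ (fun k => (hgap k).1) hLmeas hLnonneg hL1 hfmeas hp hMp hfp hw0 hm)
    (lpE_pointShift_le hδ hδΔ hgap hLmeas hfmeas hp hfp hw0 hm))) (le_of_eq ?_)
  rw [lpE_const_mul hp _ (by fun_prop), pNorm_eq_lpE hp hfmeas, mul_right_comm,
    ENNReal.ofReal_mul hC, ENNReal.ofReal_toReal (lpE_ne_top hp hfp)]
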